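/- Gil-Pelaez inversion: if G is a real random variable with characteristic function Ψ_G and the distribution of G has no atom at g, then the CDF satisfies F_G(g) = 1/2 − (1/π) ∫₀^∞ Im(e^{−iωg} Ψ_G(ω))/ω dω. -/

import Mathlib

open MeasureTheory ProbabilityTheory Complex Real

/-!
The sine integral `Si x = ∫₀ˣ sin t / t dt` is bounded and tends to `± π / 2` at `± ∞`, so
`∫_ε^R sin (ω x) / ω dω = Si (R x) - Si (ε x)` stays bounded and tends to `(π / 2) sign x` as
`ε → 0⁺` and `R → ∞`. The imaginary part of `exp (-i ω g) Ψ_G(ω)` is `E[sin (ω (G - g))]`. By Fubini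
on `[ε, R]` and dominated convergence, its integral against `dω / ω` tends to
`(π / 2) E[sign (G - g)]`, which is an affine function of `P (G ≤ g)` and `P (G = g)`.
-/

open Filter Set Topology

section SineIntegral

/-- The sine integral `Si x = ∫₀ˣ sin t / t dt`, whose limit `π / 2` at `∞` is the Dirichlet
integral. Writing the integrand as `Real.sinc` makes it continuous at `0`. -/
noncomputable def sineIntegral (x : ℝ) : ℝ := ∫ t in 0..x, Real.sinc t

lemma continuous_sineIntegral : Continuous sineIntegral :=
  intervalIntegral.continuous_primitive
    (fun _ _ => Real.continuous_sinc.intervalIntegrable _ _) 0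

lemma sineIntegral_zero : sineIntegral 0 = 0 := intervalIntegral.integral_same

lemma sineIntegral_neg (x : ℝ) : sineIntegral (-x) = -sineIntegral x := by
  have h := intervalIntegral.integral_comp_neg (a := 0) (b := x) Real.sinc
  simp only [Real.sinc_neg, neg_zero] at h
  rw [sineIntegral, sineIntegral, h, intervalIntegral.integral_symm]

lemma intervalIntegral_exp_neg_mul_mul_sin (s R : ℝ) :
    ∫ t in 0..R, Real.exp (-s * t) * Real.sin t
      = (1 + s ^ 2)⁻¹ - Real.exp (-s * R) * (s * Real.sin R + Real.cos R) / (1 + s ^ 2) := by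
  have hderiv (t : ℝ) : HasDerivAt
      (fun t => -(Real.exp (-s * t) * (s * Real.sin t + Real.cos t)) / (1 + s ^ 2))
      (Real.exp (-s * t) * Real.sin t) t := by
    have hexp := ((hasDerivAt_id' t).const_mul (-s)).exp
    have htrig := ((Real.hasDerivAt_sin t).const_mul s).add (Real.hasDerivAt_cos t)
    refine ((hexp.mul htrig).neg.div_const (1 + s ^ 2)).congr_deriv ?_
    field_simp
    simp only [Pi.add_apply]
    ring
  rw [intervalIntegral.integral_eq_sub_of_hasDerivAt (fun t _ => hderiv t)
    (Continuous.intervalIntegrable (by fun_prop) _ _)]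
  simp only [Real.sin_zero, Real.cos_zero, mul_zero, Real.exp_zero]
  ring

lemma abs_mul_sin_add_cos_le (s R : ℝ) : |s * Real.sin R + Real.cos R| ≤ 1 + s ^ 2 := by
  refine abs_le_of_sq_le_sq ?_ (by positivity)
  calc (s * Real.sin R + Real.cos R) ^ 2
      ≤ (s * Real.sin R + Real.cos R) ^ 2 + (s * Real.cos R - Real.sin R) ^ 2 :=
        le_add_of_nonneg_right (sq_nonneg _)
    _ = (1 + s ^ 2) * (Real.sin R ^ 2 + Real.cos R ^ 2) := by ring
    _ = 1 + s ^ 2 := by rw [Real.sin_sq_add_cos_sq, mul_one]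
    _ ≤ (1 + s ^ 2) ^ 2 := le_self_pow₀ (by nlinarith) two_ne_zero

lemma integrableOn_Ioi_exp_neg_mul {t : ℝ} (ht : 0 < t) :
    IntegrableOn (fun s => Real.exp (-s * t)) (Ioi 0) := by
  simpa [mul_comm] using integrableOn_exp_mul_Ioi (neg_neg_of_pos ht) 0

lemma integral_Ioi_exp_neg_mul {t : ℝ} (ht : 0 < t) :
    ∫ s in Ioi 0, Real.exp (-s * t) = 1 / t := by
  simpa [mul_comm] using integral_exp_mul_Ioi (neg_neg_of_pos ht) 0

lemma integrable_prod_exp_neg_mul_mul_sin (R : ℝ) :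
    Integrable (Function.uncurry fun t s : ℝ => Real.exp (-s * t) * Real.sin t)
      ((volume.restrict (Ioc 0 R)).prod (volume.restrict (Ioi 0))) := by
  refine (integrable_prod_iff (Continuous.aestronglyMeasurable (by fun_prop))).2 ⟨?_, ?_⟩
  · filter_upwards [ae_restrict_mem measurableSet_Ioc] with t ht
    exact (integrableOn_Ioi_exp_neg_mul ht.1).integrable.mul_const (Real.sin t)
  · have hsinc : IntegrableOn (fun t => |Real.sinc t|) (Ioc 0 R) :=
      (Real.continuous_sinc.abs.integrableOn_Icc).mono_set Ioc_subset_Icc_self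
    refine hsinc.congr ?_
    filter_upwards [ae_restrict_mem measurableSet_Ioc] with t ht
    simp only [Function.uncurry, norm_mul, Real.norm_eq_abs, Real.abs_exp, integral_mul_const]
    rw [integral_Ioi_exp_neg_mul ht.1, Real.sinc_of_ne_zero ht.1.ne', abs_div, abs_of_pos ht.1,
      one_div_mul_eq_div]

-- Insert `1 / t = ∫₀^∞ exp (-s t) ds` and integrate in `t` first.
lemma sineIntegral_eq_integral_Ioi {R : ℝ} (hR : 0 ≤ R) :
    sineIntegral R = ∫ s in Ioi 0, ((1 + s ^ 2)⁻¹
      - Real.exp (-s * R) * (s * Real.sin R + Real.cos R) / (1 + s ^ 2)) := by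
  calc sineIntegral R
      = ∫ t in Ioc 0 R, ∫ s in Ioi 0, Real.exp (-s * t) * Real.sin t := by
        rw [sineIntegral, intervalIntegral.integral_of_le hR]
        refine setIntegral_congr_fun measurableSet_Ioc fun t ht => ?_
        simp only [integral_mul_const]
        rw [integral_Ioi_exp_neg_mul ht.1, one_div_mul_eq_div, Real.sinc_of_ne_zero ht.1.ne']
    _ = ∫ s in Ioi 0, ∫ t in Ioc 0 R, Real.exp (-s * t) * Real.sin t :=
        integral_integral_swap (integrable_prod_exp_neg_mul_mul_sin R)
    _ = _ := by
        simp only [← intervalIntegral.integral_of_le hR, intervalIntegral_exp_neg_mul_mul_sin]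

lemma abs_sineIntegral_sub_pi_div_two_le {R : ℝ} (hR : 0 < R) :
    |sineIntegral R - π / 2| ≤ 1 / R := by
  set remainder : ℝ → ℝ := fun s =>
    Real.exp (-s * R) * (s * Real.sin R + Real.cos R) / (1 + s ^ 2) with hrem
  have hexp_int := integrableOn_Ioi_exp_neg_mul hR
  have hbound (s : ℝ) : ‖remainder s‖ ≤ Real.exp (-s * R) := by
    have hpos : 0 < 1 + s ^ 2 := by positivity
    simp only [hrem, norm_div, norm_mul, Real.norm_eq_abs, Real.abs_exp, abs_of_pos hpos]
    rw [div_le_iff₀ hpos]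
    gcongr
    exact abs_mul_sin_add_cos_le s R
  have hrem_int : IntegrableOn remainder (Ioi 0) :=
    hexp_int.mono' (Measurable.aestronglyMeasurable (by fun_prop)) (ae_of_all _ hbound)
  have hsub : sineIntegral R - π / 2 = -∫ s in Ioi 0, remainder s := by
    rw [sineIntegral_eq_integral_Ioi hR.le,
      integral_sub integrable_inv_one_add_sq.integrableOn hrem_int, integral_Ioi_inv_one_add_sq,
      Real.arctan_zero]
    ring
  calc |sineIntegral R - π / 2| = ‖∫ s in Ioi 0, remainder s‖ := by
        rw [hsub, abs_neg, Real.norm_eq_abs]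
    _ ≤ ∫ s in Ioi 0, Real.exp (-s * R) :=
        norm_integral_le_of_norm_le hexp_int (ae_of_all _ hbound)
    _ = 1 / R := integral_Ioi_exp_neg_mul hR

lemma tendsto_sineIntegral_atTop : Tendsto sineIntegral atTop (𝓝 (π / 2)) := by
  have hinv : Tendsto (fun R : ℝ => 1 / R) atTop (𝓝 0) :=
    tendsto_const_nhds.div_atTop tendsto_id
  refine tendsto_iff_norm_sub_tendsto_zero.2
    (squeeze_zero' (Eventually.of_forall fun _ => norm_nonneg _) ?_ hinv)
  filter_upwards [eventually_gt_atTop 0] with R hR using abs_sineIntegral_sub_pi_div_two_le hR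

lemma tendsto_sineIntegral_atBot : Tendsto sineIntegral atBot (𝓝 (-(π / 2))) := by
  simpa [Function.comp_def, sineIntegral_neg] using
    (tendsto_sineIntegral_atTop.comp tendsto_neg_atBot_atTop).neg

lemma abs_sineIntegral_le (x : ℝ) : |sineIntegral x| ≤ π / 2 + 1 := by
  wlog hx : 0 ≤ x generalizing x
  · simpa [sineIntegral_neg] using this (-x) (by linarith)
  rcases le_total x 1 with hx1 | hx1
  · have hle : ‖sineIntegral x‖ ≤ 1 * |x - 0| :=
      intervalIntegral.norm_integral_le_of_norm_le_const fun t _ => Real.abs_sinc_le_one t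
    rw [Real.norm_eq_abs, sub_zero, abs_of_nonneg hx] at hle
    linarith [Real.pi_pos]
  · have hclose := abs_le.1 (abs_sineIntegral_sub_pi_div_two_le (zero_lt_one.trans_le hx1))
    have hinv : 1 / x ≤ 1 := (div_le_one (by linarith)).2 hx1
    exact abs_le.2 ⟨by linarith [Real.pi_pos], by linarith⟩

lemma intervalIntegral_sin_mul_div (a b x : ℝ) :
    ∫ w in a..b, Real.sin (w * x) / w = sineIntegral (b * x) - sineIntegral (a * x) := by
  have hsinc : ∀ᵐ w : ℝ, Real.sin (w * x) / w = x * Real.sinc (w * x) := by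
    filter_upwards [compl_mem_ae_iff.2 (measure_singleton (0 : ℝ))] with w hw
    rcases eq_or_ne x 0 with rfl | hx
    · simp
    · have hw : w ≠ 0 := hw
      rw [Real.sinc_of_ne_zero (mul_ne_zero hw hx)]
      field_simp
  rw [intervalIntegral.integral_congr_ae (hsinc.mono fun w hw _ => hw),
    intervalIntegral.integral_const_mul, intervalIntegral.mul_integral_comp_mul_right,
    sineIntegral, sineIntegral, intervalIntegral.integral_interval_sub_left] <;>
  exact Real.continuous_sinc.intervalIntegrable _ _

lemma tendsto_sineIntegral_mul_sub_mul (x : ℝ) :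
    Tendsto (fun p : ℝ × ℝ => sineIntegral (p.2 * x) - sineIntegral (p.1 * x))
      (𝓝[>] 0 ×ˢ atTop) (𝓝 (π / 2 * Real.sign x)) := by
  have hzero : Tendsto (fun ε : ℝ => sineIntegral (ε * x)) (𝓝[>] 0) (𝓝 0) := by
    have hcont : Continuous fun ε : ℝ => sineIntegral (ε * x) :=
      continuous_sineIntegral.comp (continuous_mul_const x)
    simpa [sineIntegral_zero] using (hcont.tendsto 0).mono_left nhdsWithin_le_nhds
  have htop : Tendsto (fun R : ℝ => sineIntegral (R * x)) atTop (𝓝 (π / 2 * Real.sign x)) := by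
    rcases lt_trichotomy x 0 with hx | rfl | hx
    · simpa [Real.sign_of_neg hx, Function.comp_def] using
        tendsto_sineIntegral_atBot.comp (tendsto_id.atTop_mul_const_of_neg hx)
    · simp [sineIntegral_zero]
    · simpa [Real.sign_of_pos hx, Function.comp_def] using
        tendsto_sineIntegral_atTop.comp (tendsto_id.atTop_mul_const hx)
  simpa using (htop.comp tendsto_snd).sub (hzero.comp tendsto_fst)

end SineIntegral

section ImproperIntegral

lemma eventually_lt_fst_and_fst_le_snd (c : ℝ) :
    ∀ᶠ p : ℝ × ℝ in 𝓝[>] c ×ˢ atTop, c < p.1 ∧ p.1 ≤ p.2 := by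
  filter_upwards [prod_mem_prod (Ioo_mem_nhdsGT (lt_add_one c)) (Ici_mem_atTop (c + 1))]
    with p ⟨hfst, hsnd⟩ using ⟨hfst.1, hfst.2.le.trans hsnd⟩

lemma tendsto_intervalIntegral_integral_Ioi {E : Type*} [NormedAddCommGroup E] [NormedSpace ℝ E]
    {μ : Measure ℝ} {f : ℝ → E} {c : ℝ} (hf : IntegrableOn f (Ioi c) μ) :
    Tendsto (fun p : ℝ × ℝ => ∫ w in p.1..p.2, f w ∂μ) (𝓝[>] c ×ˢ atTop)
      (𝓝 (∫ w in Ioi c, f w ∂μ)) := by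
  have hcover : AECover (μ.restrict (Ioi c)) (𝓝[>] c ×ˢ atTop)
      (fun p : ℝ × ℝ => Ioi p.1 ∩ Iic p.2) :=
    (aecover_Ioi_of_Ioi (tendsto_fst.mono_right nhdsWithin_le_nhds)).inter
      (aecover_Iic tendsto_snd).restrict
  refine (hcover.integral_tendsto_of_countably_generated hf).congr' ?_
  filter_upwards [eventually_lt_fst_and_fst_le_snd c] with p ⟨hlt, hle⟩
  rw [intervalIntegral.integral_of_le hle, Ioi_inter_Iic,
    Measure.restrict_restrict_of_subset (Ioc_subset_Ioi_self.trans (Ioi_subset_Ioi hlt.le))]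

end ImproperIntegral

section RandomVariable

variable {Ω : Type*} [MeasurableSpace Ω] {P : Measure Ω} [IsFiniteMeasure P] {X : Ω → ℝ}

lemma intervalIntegral_integral_sin_mul_div (hX : AEMeasurable X P) {a b : ℝ} (ha : 0 < a)
    (hab : a ≤ b) :
    ∫ w in a..b, (∫ t, Real.sin (w * X t) ∂P) / w
      = ∫ t, (sineIntegral (b * X t) - sineIntegral (a * X t)) ∂P := by
  have hint : Integrable (Function.uncurry fun w t => Real.sin (w * X t) / w)
      ((volume.restrict (uIoc a b)).prod P) := by
    rw [uIoc_of_le hab]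
    refine Integrable.of_bound (AEMeasurable.aestronglyMeasurable ?_) a⁻¹ ?_
    · have hX' : AEMeasurable (fun p : ℝ × Ω => X p.2) ((volume.restrict (Ioc a b)).prod P) :=
        hX.comp_snd
      exact (Real.measurable_sin.comp_aemeasurable (measurable_fst.aemeasurable.mul hX')).div
        measurable_fst.aemeasurable
    · have hfst : ∀ᵐ p ∂(volume.restrict (Ioc a b)).prod P, p.1 ∈ Ioc a b :=
        Measure.quasiMeasurePreserving_fst.ae (ae_restrict_mem measurableSet_Ioc)
      filter_upwards [hfst] with p hp
      rw [Function.uncurry, norm_div, Real.norm_eq_abs, Real.norm_eq_abs,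
        abs_of_pos (ha.trans hp.1), ← one_div]
      exact div_le_div₀ zero_le_one (Real.abs_sin_le_one _) ha hp.1.le
  simp only [← integral_div, ← intervalIntegral_sin_mul_div]
  exact intervalIntegral_integral_swap hint

lemma tendsto_intervalIntegral_integral_sin_mul_div (hX : AEMeasurable X P) :
    Tendsto (fun p : ℝ × ℝ => ∫ w in p.1..p.2, (∫ t, Real.sin (w * X t) ∂P) / w)
      (𝓝[>] 0 ×ˢ atTop) (𝓝 (π / 2 * ∫ t, Real.sign (X t) ∂P)) := by
  have hlim : Tendsto
      (fun p : ℝ × ℝ => ∫ t, (sineIntegral (p.2 * X t) - sineIntegral (p.1 * X t)) ∂P)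
      (𝓝[>] 0 ×ˢ atTop) (𝓝 (∫ t, π / 2 * Real.sign (X t) ∂P)) := by
    refine tendsto_integral_filter_of_dominated_convergence
      (fun _ => (π / 2 + 1) + (π / 2 + 1)) (Eventually.of_forall fun p => ?_)
      (Eventually.of_forall fun p => ae_of_all _ fun t => ?_) (integrable_const _)
      (ae_of_all _ fun t => tendsto_sineIntegral_mul_sub_mul (X t))
    · have hSi (c : ℝ) : AEMeasurable (fun t => sineIntegral (c * X t)) P :=
        continuous_sineIntegral.measurable.comp_aemeasurable (hX.const_mul c)
      exact ((hSi p.2).sub (hSi p.1)).aestronglyMeasurable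
    · exact (norm_sub_le _ _).trans
        (add_le_add (abs_sineIntegral_le _) (abs_sineIntegral_le _))
  rw [← integral_const_mul]
  refine hlim.congr' ?_
  filter_upwards [eventually_lt_fst_and_fst_le_snd 0] with p ⟨hpos, hle⟩
  exact (intervalIntegral_integral_sin_mul_div hX hpos hle).symm

lemma im_exp_mul_integral_exp (hX : AEMeasurable X P) (g w : ℝ) :
    (Complex.exp (-Complex.I * w * g) * ∫ t, Complex.exp (Complex.I * w * X t) ∂P).im
      = ∫ t, Real.sin (w * (X t - g)) ∂P := by
  have hexp (t : Ω) : Complex.exp (-Complex.I * w * g) * Complex.exp (Complex.I * w * X t)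
      = Complex.exp ((w * (X t - g) : ℝ) * Complex.I) := by
    rw [← Complex.exp_add]
    push_cast
    ring_nf
  have hint : Integrable (fun t => Complex.exp ((w * (X t - g) : ℝ) * Complex.I)) P :=
    Integrable.of_bound (AEMeasurable.aestronglyMeasurable (by fun_prop)) 1
      (ae_of_all _ fun t => (Complex.norm_exp_ofReal_mul_I _).le)
  simp only [← integral_const_mul, hexp]
  rw [← RCLike.im_eq_complex_im, ← integral_im hint]
  simp only [RCLike.im_eq_complex_im, Complex.exp_ofReal_mul_I_im]

lemma integral_sign_sub (hX : AEMeasurable X P) (g : ℝ) :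
    ∫ t, Real.sign (X t - g) ∂P
      = P.real univ - 2 * P.real {t | X t ≤ g} + P.real {t | X t = g} := by
  have hle : NullMeasurableSet {t | X t ≤ g} P := nullMeasurableSet_le hX aemeasurable_const
  have heq : NullMeasurableSet {t | X t = g} P := nullMeasurableSet_eq_fun hX aemeasurable_const
  have hsign (t : Ω) : Real.sign (X t - g)
      = 1 - {t | X t ≤ g}.indicator (fun _ => 2) t + {t | X t = g}.indicator (fun _ => 1) t := by
    rcases lt_trichotomy (X t) g with h | h | h
    · norm_num [Real.sign_of_neg (sub_neg.2 h), h.le, h.ne]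
    · norm_num [h]
    · simp [Real.sign_of_pos (sub_pos.2 h), h.not_ge, h.ne']
  have hle_int := (integrable_const (μ := P) (2 : ℝ)).indicator₀ hle
  have heq_int := (integrable_const (μ := P) (1 : ℝ)).indicator₀ heq
  simp only [hsign]
  rw [integral_add (by fun_prop) heq_int, integral_sub (integrable_const _) hle_int,
    integral_indicator₀ hle, integral_indicator₀ heq]
  simp [mul_comm]

end RandomVariable

theorem gil_pelaez_inversion_general {Ω : Type*} [MeasurableSpace Ω] (P : Measure Ω)
    [IsFiniteMeasure P] (G : Ω → ℝ) (hG : AEMeasurable G P) (g : ℝ)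
    (Ψ : ℝ → ℂ) (hΨ : Ψ = fun w : ℝ => ∫ t, Complex.exp (Complex.I * (w : ℂ) * G t) ∂P) :
    Tendsto (fun p : ℝ × ℝ => P.real univ / 2 - (1 / π) *
        ∫ w in p.1..p.2, (Complex.exp (-Complex.I * (w : ℂ) * g) * Ψ w).im / w)
      (𝓝[>] 0 ×ˢ atTop) (𝓝 (P.real {ω | G ω ≤ g} - P.real {ω | G ω = g} / 2)) := by
  have hsin := tendsto_intervalIntegral_integral_sin_mul_div (hG.sub_const g)
  rw [integral_sign_sub hG g] at hsin
  simp only [hΨ, im_exp_mul_integral_exp hG]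
  convert (hsin.const_mul (1 / π)).const_sub (P.real univ / 2) using 2
  field_simp
  ring

/-- Gil-Pelaez inversion formula: if `G` is a real random variable with
characteristic function `Ψ_G`, whose distribution has no atom at `g`, and the
inversion integrand is integrable on `(0, ∞)`, then
`F_G(g) = 1/2 − (1/π) ∫₀^∞ Im(e^{−iωg}Ψ_G(ω))/ω dω`. -/
theorem gil_pelaez_inversion {Ω : Type*} [MeasurableSpace Ω] (P : Measure Ω)
    [IsProbabilityMeasure P] (G : Ω → ℝ) (hG : Measurable G) (g : ℝ)
    (hnoatom : P {ω | G ω = g} = 0)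
    (Ψ : ℝ → ℂ) (hΨ : Ψ = fun w : ℝ => ∫ t, Complex.exp (Complex.I * (w : ℂ) * G t) ∂P)
    (hint : IntegrableOn
      (fun w : ℝ => (Complex.exp (-Complex.I * (w : ℂ) * g) * Ψ w).im / w)
      (Set.Ioi (0 : ℝ)) volume) :
    (P {ω | G ω ≤ g}).toReal
      = 1 / 2 - (1 / π) *
        ∫ w in Set.Ioi (0 : ℝ), (Complex.exp (-Complex.I * (w : ℂ) * g) * Ψ w).im / w := by
  have hlim := gil_pelaez_inversion_general P G hG.aemeasurable g Ψ hΨ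
  have hint_lim := (tendsto_intervalIntegral_integral_Ioi hint).const_mul (1 / π)
  exact tendsto_nhds_unique (by simpa [Measure.real, hnoatom] using hlim)
    (hint_lim.const_sub (1 / 2))
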